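/- Let d ≥ 3, r ≤ R ∈ N, and define D = {y ∈ 10rZ^d : B(y,r) ∩ B(2R) ≠ ∅} and, for a simple random walk started at z ∈ B(R), the indicators ζ_y = 1[T_{B(y,r)} < ∞]. Then there exists C < ∞ (depending only on d) such that E_z[Σ_{y∈D} ζ_y] ≤ C·(R/r)². -/

import Mathlib

open MeasureTheory ENNReal Filter

noncomputable section

abbrev Zd (d : ℕ) := Fin d → ℤ

def supNorm {d : ℕ} (x : Zd d) : ℕ := Finset.univ.sup fun i => (x i).natAbs

def IsNbr {d : ℕ} (x y : Zd d) : Prop := (∑ i, |x i - y i|) = 1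

def stepVec {d : ℕ} (p : Fin d × Bool) : Zd d :=
  fun j => if j = p.1 then (if p.2 then 1 else -1) else 0

def nbrs {d : ℕ} (y : Zd d) : Finset (Zd d) :=
  Finset.univ.image fun p : Fin d × Bool => y + stepVec p

/-- A family of measures which is a simple random walk on `ℤ^d` started at `x`. -/
structure SRW (d : ℕ) where
  P : Zd d → Measure (ℕ → Zd d)
  isProb : ∀ x, IsProbabilityMeasure (P x)
  start : ∀ x, P x {ω | ω 0 = x} = 1
  nn : ∀ x, P x {ω | ∀ t, IsNbr (ω t) (ω (t+1))} = 1
  cyl : ∀ (x : Zd d) (n : ℕ) (γ : ℕ → Zd d), γ 0 = x →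
      (∀ t < n, IsNbr (γ t) (γ (t+1))) →
      P x {ω | ∀ t ≤ n, ω t = γ t} = (((2 * d : ℕ) : ℝ≥0∞))⁻¹ ^ n

def HitBy {d : ℕ} (K : Set (Zd d)) (ℓ : ℕ) : Set (ℕ → Zd d) := {ω | ∃ t ≤ ℓ, ω t ∈ K}

def Hits {d : ℕ} (K : Set (Zd d)) : Set (ℕ → Zd d) := {ω | ∃ t, ω t ∈ K}

def nPaths (d : ℕ) : ℕ → Zd d → Zd d → ℕ
  | 0, x, y => if x = y then 1 else 0
  | t+1, x, y => ∑ z ∈ nbrs y, nPaths d t x z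

def pKer (d t : ℕ) (x y : Zd d) : ℝ≥0∞ := (nPaths d t x y : ℝ≥0∞) / ((2*d : ℕ) : ℝ≥0∞)^t

def green (d : ℕ) (x y : Zd d) : ℝ≥0∞ := ∑' t, pKer d t x y

def nAvoid {d : ℕ} (K : Finset (Zd d)) : ℕ → Zd d → ℕ
  | 0, _ => 1
  | t+1, x => ∑ z ∈ (nbrs x).filter (fun z => z ∉ K), nAvoid K t z

def escProb {d : ℕ} (K : Finset (Zd d)) (x : Zd d) : ℝ≥0∞ :=
  ⨅ n, (nAvoid K n x : ℝ≥0∞) / ((2*d : ℕ) : ℝ≥0∞)^n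

def cap {d : ℕ} (K : Finset (Zd d)) : ℝ≥0∞ := ∑ x ∈ K, escProb K x

def ConnIn {d : ℕ} (S : Set (Zd d)) (x y : Zd d) : Prop :=
  ∃ (n : ℕ) (γ : ℕ → Zd d), γ 0 = x ∧ γ n = y ∧ (∀ t < n, IsNbr (γ t) (γ (t+1))) ∧ ∀ t ≤ n, γ t ∈ S

def PercSet {d : ℕ} (S : Set (Zd d)) : Prop := ∃ x ∈ S, {y | ConnIn S x y}.Infinite

def IsAnimal {d : ℕ} (H : Finset (Zd d)) : Prop :=
  (0 : Zd d) ∈ H ∧ ∀ x ∈ H, ∀ y ∈ H, ConnIn (H : Set (Zd d)) x y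

abbrev Animal (d : ℕ) := {H : Finset (Zd d) // IsAnimal H}

def zooTrace {d : ℕ} {Ω : Type*} (N : Zd d × Animal d → Ω → ℕ) (ω : Ω) : Set (Zd d) :=
  {z | ∃ p : Zd d × Animal d, 1 ≤ N p ω ∧ z - p.1 ∈ p.2.1}

def poissonProb (lam : ℝ) (k : ℕ) : ℝ≥0∞ :=
  ENNReal.ofReal (Real.exp (-lam) * lam ^ k / (Nat.factorial k))

def cluster {d : ℕ} (S : Set (Zd d)) (x : Zd d) : Set (Zd d) := {y | x ∈ S ∧ ConnIn S x y}

def closF {d : ℕ} (H : Finset (Zd d)) : Finset (Zd d) := H ∪ H.biUnion nbrs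


abbrev Worm (d : ℕ) := Σ n : ℕ, (Zd d × (Fin n → Fin d × Bool))

def wormLen {d : ℕ} (w : Worm d) : ℕ := w.1 + 1

def IsBernoulliSite {d : ℕ} (P : Measure (Zd d → Bool)) (p : ℝ≥0∞) : Prop :=
  ∀ A B : Finset (Zd d), Disjoint A B →
    P {η | (∀ a ∈ A, η a = true) ∧ ∀ b ∈ B, η b = false} = p ^ A.card * (1 - p) ^ B.card

/-- The critical probability of Bernoulli site percolation on `ℤ^d`. -/
def pcSite (d : ℕ) : ℝ≥0∞ :=
  sInf {p | ∀ P : Measure (Zd d → Bool), IsProbabilityMeasure P → IsBernoulliSite P p →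
    P {η | PercSet {x | η x = true}} = 1}

open Classical in
/-- The Grimmett–Marstrand exploration process: given an ordering `emb` of the (directed)
nearest-neighbour edges and outcomes `b t`, produce the pair (good set, bad set) at step `t`. -/
def explore {d : ℕ} (emb : (Zd d × Zd d) ↪ ℕ) (b : ℕ → Bool) : ℕ → Finset (Zd d) × Finset (Zd d)
  | 0 => if b 0 then ({0}, ∅) else (∅, {0})
  | t+1 =>
    let G := (explore emb b t).1
    let B := (explore emb b t).2
    let cand : Finset (Zd d × Zd d) :=
      G.biUnion fun u => ((nbrs u).filter fun w => w ∉ G ∧ w ∉ B).image fun w => (u, w)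
    if h : cand.Nonempty then
      let e := (Finset.exists_min_image cand (fun p => emb p) h).choose
      if b (t+1) then (insert e.2 G, B) else (G, insert e.2 B)
    else (G, B)

/-- Mutual Dirichlet energy of two measures on `ℤ^d` w.r.t. the random-walk Green function. -/
def energy (d : ℕ) (μ₁ μ₂ : Zd d → ℝ≥0∞) : ℝ≥0∞ :=
  ∑' x, ∑' y, green d x y * μ₁ x * μ₂ y

/-!
From any point `w` of `B(y, r)` the walk spends expected time at least `r²` in `B(y, 2r)`, because
`r² - |x - w|²` decreases by exactly one on average at each step and is positive only inside
`B(w, r)`. Hence the probability of ever hitting `B(y, r)` is at most `r⁻²` times the expected time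
spent in `B(y, 2r)`. The doubled balls around the points of `10rℤᵈ` are disjoint and those which
matter lie in a ball of radius `O(R)`, so the expected number of visited balls is at most `r⁻²`
times the expected time spent in that ball. The latter is `O(R²)`: for `c` of order `R²`, one step
of the walk decreases `(c + |x|²)^(-1/2)` on average everywhere when `d ≥ 3`, by at least a multiple
of `R⁻³` on the ball, while the function itself is at most a multiple of `R⁻¹`.
-/

section Geometry

variable {d : ℕ}

theorem natCast_supNorm (x : Zd d) : (supNorm x : ℝ) = ‖x‖ := by
  refine eq_of_forall_ge_iff fun c => ?_
  rcases lt_or_ge c 0 with hc | hc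
  · exact iff_of_false (not_le.2 (hc.trans_le (Nat.cast_nonneg _)))
      (not_le.2 (hc.trans_le (norm_nonneg _)))
  · rw [← Nat.le_floor_iff hc, supNorm, Finset.sup_le_iff, pi_norm_le_iff_of_nonneg hc]
    simp only [Finset.mem_univ, true_imp_iff, Nat.le_floor_iff hc, Int.norm_eq_abs,
      Nat.cast_natAbs, Int.cast_abs]

theorem setOf_supNorm_sub_le (y : Zd d) (r : ℕ) :
    {w : Zd d | supNorm (w - y) ≤ r} = Metric.closedBall y r := by
  ext w
  rw [Set.mem_ofPred_eq, mem_closedBall_iff_norm, ← natCast_supNorm, Nat.cast_le]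

theorem le_dist_of_dvd_coord {k : ℤ} {x y : Zd d} (hx : ∀ i, k ∣ x i) (hy : ∀ i, k ∣ y i)
    (hne : x ≠ y) : (k : ℝ) ≤ dist x y := by
  obtain ⟨i, hi⟩ := Function.ne_iff.1 hne
  have hk : k ≤ |x i - y i| :=
    Int.le_of_dvd (abs_pos.2 (sub_ne_zero.2 hi)) ((dvd_abs _ _).2 (dvd_sub (hx i) (hy i)))
  calc (k : ℝ) ≤ dist (x i) (y i) := by rw [Int.dist_eq]; exact_mod_cast hk
    _ ≤ dist x y := dist_le_pi_dist x y i

theorem exists_eq_add_stepVec_of_isNbr {x y : Zd d} (h : IsNbr x y) :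
    ∃ p : Fin d × Bool, y = x + stepVec p := by
  have hsum : ∑ i, |x i - y i| = 1 := h
  obtain ⟨i, -, hi⟩ : ∃ i ∈ Finset.univ, |x i - y i| ≠ 0 :=
    Finset.exists_ne_zero_of_sum_ne_zero (hsum.trans_ne one_ne_zero)
  have hpos : 0 < |x i - y i| := (abs_nonneg _).lt_of_ne' hi
  have hoff : ∀ j ≠ i, x j = y j := fun j hj => by
    have hpair : |x i - y i| + |x j - y j| ≤ 1 := hsum ▸
      Finset.add_le_sum (fun k _ => abs_nonneg (x k - y k)) (Finset.mem_univ i)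
        (Finset.mem_univ j) hj.symm
    exact sub_eq_zero.1 (abs_nonpos_iff.1 (by linarith))
  have hle : |x i - y i| ≤ 1 :=
    hsum ▸ Finset.single_le_sum (fun k _ => abs_nonneg (x k - y k)) (Finset.mem_univ i)
  have hstep (b : Bool) (hb : y i = x i + if b then 1 else -1) : y = x + stepVec (i, b) := by
    funext j
    rcases eq_or_ne j i with rfl | hj
    · simpa [stepVec] using hb
    · simp [stepVec, hj, hoff j hj]
  rcases (abs_eq zero_le_one).1 (le_antisymm hle hpos) with h1 | h1
  · exact ⟨_, hstep false (by simp; omega)⟩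
  · exact ⟨_, hstep true (by simp; omega)⟩

theorem isNbr_add_stepVec (x : Zd d) (p : Fin d × Bool) : IsNbr x (x + stepVec p) := by
  rw [IsNbr, Finset.sum_eq_single p.1 (fun j _ hj => by simp [stepVec, hj]) (by simp)]
  cases h : p.2 <;> simp [stepVec, h]

/-- The squared Euclidean norm `|x|²`, as opposed to the sup norm carried by `Zd d`. -/
def sqNorm (x : Zd d) : ℝ := ∑ i, (x i : ℝ) ^ 2

theorem sqNorm_nonneg (x : Zd d) : 0 ≤ sqNorm x := Finset.sum_nonneg fun _ _ => sq_nonneg _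

theorem sq_apply_le_sqNorm (x : Zd d) (i : Fin d) : (x i : ℝ) ^ 2 ≤ sqNorm x :=
  Finset.single_le_sum (f := fun i => (x i : ℝ) ^ 2) (fun _ _ => sq_nonneg _) (Finset.mem_univ i)

theorem norm_le_of_sqNorm_le_sq {x : Zd d} {r : ℝ} (hr : 0 ≤ r) (h : sqNorm x ≤ r ^ 2) :
    ‖x‖ ≤ r := by
  refine (pi_norm_le_iff_of_nonneg hr).2 fun i => ?_
  rw [Int.norm_eq_abs]
  exact abs_le_of_sq_le_sq ((sq_apply_le_sqNorm x i).trans h) hr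

theorem sqNorm_le_card_mul_norm_sq (x : Zd d) : sqNorm x ≤ d * ‖x‖ ^ 2 := by
  calc sqNorm x ≤ ∑ _i : Fin d, ‖x‖ ^ 2 := Finset.sum_le_sum fun i _ => by
        rw [← sq_abs, ← Int.norm_eq_abs]
        exact pow_le_pow_left₀ (norm_nonneg _) (norm_le_pi_norm x i) 2
    _ = d * ‖x‖ ^ 2 := by simp

theorem sqNorm_add_stepVec (x : Zd d) (i : Fin d) (b : Bool) :
    sqNorm (x + stepVec (i, b)) = sqNorm x + (if b then 2 else -2) * x i + 1 := by
  have hcoord : ∀ j, (((x + stepVec (i, b)) j : ℤ) : ℝ) ^ 2 =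
      (x j : ℝ) ^ 2 + if j = i then (if b then 2 else -2) * (x j : ℝ) + 1 else 0 := fun j => by
    rcases eq_or_ne j i with rfl | hj
    · cases b <;> simp [stepVec] <;> ring
    · simp [stepVec, hj]
  simp only [sqNorm, hcoord, Finset.sum_add_distrib, Finset.sum_ite_eq', Finset.mem_univ, if_true,
    add_assoc]

end Geometry

section Averages

variable {d : ℕ}

/-- The transition operator of simple random walk, `(Qf)(x) = E_x[f(X₁)]`, acting on extended
nonnegative functions so that Green potentials need no summability hypotheses. -/
def stepAvg (d : ℕ) : Module.End ℝ≥0∞ (Zd d → ℝ≥0∞) :=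
  ((2 * d : ℕ) : ℝ≥0∞)⁻¹ • ∑ p : Fin d × Bool, LinearMap.funLeft ℝ≥0∞ ℝ≥0∞ (· + stepVec p)

theorem stepAvg_apply (f : Zd d → ℝ≥0∞) (x : Zd d) :
    stepAvg d f x = ((2 * d : ℕ) : ℝ≥0∞)⁻¹ * ∑ p : Fin d × Bool, f (x + stepVec p) := by
  simp [stepAvg, LinearMap.funLeft_apply]

theorem stepAvg_mono : Monotone (stepAvg d) := fun f g h x => by
  simp only [stepAvg_apply]
  gcongr
  exact h _

theorem stepAvg_pow_mono (n : ℕ) : Monotone (stepAvg d ^ n) := by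
  rw [Module.End.coe_pow]
  exact stepAvg_mono.iterate n

/-- The average over the nearest neighbours, as `stepAvg` but for real-valued functions. -/
def nbrMean (h : Zd d → ℝ) (x : Zd d) : ℝ := (2 * d : ℝ)⁻¹ * ∑ p : Fin d × Bool, h (x + stepVec p)

theorem nbrMean_nonneg {h : Zd d → ℝ} (hh : 0 ≤ h) (x : Zd d) : 0 ≤ nbrMean h x :=
  mul_nonneg (by positivity) (Finset.sum_nonneg fun _ _ => hh _)

theorem nbrMean_eq_sum_coord (h : Zd d → ℝ) (x : Zd d) :
    nbrMean h x =
      (2 * d : ℝ)⁻¹ * ∑ i, (h (x + stepVec (i, true)) + h (x + stepVec (i, false))) := by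
  simp only [nbrMean, Fintype.sum_prod_type, Fintype.sum_bool]

theorem nbrMean_const_mul_comp_sub (c : ℝ) (h : Zd d → ℝ) (a x : Zd d) :
    nbrMean (fun y => c * h (y - a)) x = c * nbrMean h (x - a) := by
  simp only [nbrMean, add_sub_right_comm, ← Finset.mul_sum]
  ring

theorem stepAvg_ofReal (hd : 0 < d) {h : Zd d → ℝ} (hh : 0 ≤ h) (x : Zd d) :
    stepAvg d (fun y => ENNReal.ofReal (h y)) x = ENNReal.ofReal (nbrMean h x) := by
  rw [stepAvg_apply, nbrMean, ENNReal.ofReal_mul (by positivity),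
    ENNReal.ofReal_inv_of_pos (by positivity),
    ENNReal.ofReal_sum_of_nonneg fun p _ => hh (x + stepVec p), ← ENNReal.ofReal_natCast]
  push_cast
  rfl

theorem ofReal_nbrMean_le (hd : 0 < d) (h : Zd d → ℝ) (x : Zd d) :
    ENNReal.ofReal (nbrMean h x) ≤ stepAvg d (fun y => ENNReal.ofReal (h y)) x := by
  have hmax : (fun y => ENNReal.ofReal (h y)) = fun y => ENNReal.ofReal (max (h y) 0) := by
    funext y
    rw [ENNReal.ofReal_max, ENNReal.ofReal_zero, max_zero]
  rw [hmax, stepAvg_ofReal hd (h := fun y => max (h y) 0) fun y => le_max_right _ _]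
  unfold nbrMean
  gcongr
  exact le_max_left _ _

theorem nbrMean_const_sub_sqNorm (hd : 0 < d) (c : ℝ) (w x : Zd d) :
    nbrMean (fun y => c - sqNorm (y - w)) x = c - sqNorm (x - w) - 1 := by
  have hterm : ∀ i : Fin d, c - sqNorm (x + stepVec (i, true) - w) +
      (c - sqNorm (x + stepVec (i, false) - w)) = 2 * (c - sqNorm (x - w) - 1) := fun i => by
    rw [add_sub_right_comm, add_sub_right_comm, sqNorm_add_stepVec, sqNorm_add_stepVec]
    simp only [if_true, Bool.false_eq_true, if_false]
    ring
  simp only [nbrMean_eq_sum_coord, hterm, Finset.sum_const, Finset.card_univ, Fintype.card_fin,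
    nsmul_eq_mul]
  field_simp

end Averages

section HittingProbabilities

variable {d : ℕ}

theorem SRW.ae_isNbr (W : SRW d) (z : Zd d) : ∀ᵐ ω ∂W.P z, ∀ t, IsNbr (ω t) (ω (t + 1)) := by
  have := W.isProb z
  have hmeas : MeasurableSet {ω : ℕ → Zd d | ∀ t, IsNbr (ω t) (ω (t + 1))} := by
    rw [Set.ofPred_forall]
    refine MeasurableSet.iInter fun t => ?_
    have hpair : Measurable fun ω : ℕ → Zd d => (ω t, ω (t + 1)) := by fun_prop
    exact hpair (MeasurableSet.of_discrete (s := {q : Zd d × Zd d | IsNbr q.1 q.2}))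
  exact (mem_ae_iff_prob_eq_one hmeas).2 (W.nn z)

theorem SRW.ae_start (W : SRW d) (z : Zd d) : ∀ᵐ ω ∂W.P z, ω 0 = z := by
  have := W.isProb z
  refine (ae_iff_prob_eq_one ?_).2 (W.start z)
  exact (Measurable.of_discrete (f := fun x : Zd d => x = z)).comp (measurable_pi_apply 0)

/-- The event that the walk follows `γ` up to time `m` and then visits `K` at one of the times
`m, …, m + n`. Since `SRW` prescribes the law of the walk only through its finite paths, these
events take the place of the Markov property in first-step analysis. -/
def FollowThenHit (K : Set (Zd d)) (γ : ℕ → Zd d) (m n : ℕ) : Set (ℕ → Zd d) :=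
  {ω | (∀ t ≤ m, ω t = γ t) ∧ ∃ t ≤ n, ω (m + t) ∈ K}

theorem SRW.followThenHit_succ_ae_le (W : SRW d) (z : Zd d) {K : Set (Zd d)} {γ : ℕ → Zd d}
    {m : ℕ} (hm : γ m ∉ K) (n : ℕ) :
    FollowThenHit K γ m (n + 1) ≤ᵐ[W.P z] ⋃ p : Fin d × Bool,
      FollowThenHit K (Function.update γ (m + 1) (γ m + stepVec p)) (m + 1) n := by
  filter_upwards [W.ae_isNbr z] with ω hnbr
  rintro ⟨hfollow, t, ht, hK⟩
  obtain ⟨p, hp⟩ := exists_eq_add_stepVec_of_isNbr (hnbr m)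
  refine Set.mem_iUnion.2 ⟨p, fun s hs => ?_, ?_⟩
  · rcases hs.eq_or_lt with rfl | hlt
    · rw [Function.update_self, hp, hfollow m le_rfl]
    · rw [Function.update_of_ne hlt.ne, hfollow s (Nat.le_of_lt_succ hlt)]
  · cases t with
    | zero => exact absurd (hfollow m le_rfl ▸ hK) hm
    | succ t => exact ⟨t, Nat.le_of_succ_le_succ ht, by rwa [add_assoc, add_comm 1 t]⟩

theorem isNbr_update_succ {γ : ℕ → Zd d} {m : ℕ} (hγ : ∀ t < m, IsNbr (γ t) (γ (t + 1)))
    (p : Fin d × Bool) : ∀ t < m + 1,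
      IsNbr (Function.update γ (m + 1) (γ m + stepVec p) t)
        (Function.update γ (m + 1) (γ m + stepVec p) (t + 1)) := by
  intro t ht
  rw [Function.update_of_ne ht.ne]
  rcases (Nat.le_of_lt_succ ht).eq_or_lt with rfl | hlt
  · rw [Function.update_self]
    exact isNbr_add_stepVec _ p
  · rw [Function.update_of_ne (by omega)]
    exact hγ t hlt

theorem SRW.measure_followThenHit_le_of_mem (W : SRW d) {K : Set (Zd d)} {γ : ℕ → Zd d} {m : ℕ}
    (hγ : ∀ t < m, IsNbr (γ t) (γ (t + 1))) {ψ : Zd d → ℝ≥0∞} (hψ : 1 ≤ ψ (γ m)) (n : ℕ) :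
    W.P (γ 0) (FollowThenHit K γ m n) ≤ ((2 * d : ℕ) : ℝ≥0∞)⁻¹ ^ m * ψ (γ m) :=
  calc W.P (γ 0) (FollowThenHit K γ m n)
    _ ≤ W.P (γ 0) {ω | ∀ t ≤ m, ω t = γ t} := measure_mono fun _ h => h.1
    _ = ((2 * d : ℕ) : ℝ≥0∞)⁻¹ ^ m * 1 := by rw [W.cyl _ m γ rfl hγ, mul_one]
    _ ≤ ((2 * d : ℕ) : ℝ≥0∞)⁻¹ ^ m * ψ (γ m) := by gcongr

theorem SRW.measure_followThenHit_le (W : SRW d) {K : Set (Zd d)} {ψ : Zd d → ℝ≥0∞}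
    (hψ : stepAvg d ψ ≤ ψ) (hK : ∀ x ∈ K, 1 ≤ ψ x) (n m : ℕ) (γ : ℕ → Zd d)
    (hγ : ∀ t < m, IsNbr (γ t) (γ (t + 1))) :
    W.P (γ 0) (FollowThenHit K γ m n) ≤ ((2 * d : ℕ) : ℝ≥0∞)⁻¹ ^ m * ψ (γ m) := by
  induction n generalizing m γ with
  | zero =>
    by_cases hm : γ m ∈ K
    · exact W.measure_followThenHit_le_of_mem hγ (hK _ hm) 0
    have hempty : FollowThenHit K γ m 0 = ∅ := Set.eq_empty_of_forall_notMem <| by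
      rintro ω ⟨hfollow, t, ht, htK⟩
      rw [Nat.le_zero.1 ht, add_zero, hfollow m le_rfl] at htK
      exact hm htK
    simp [hempty]
  | succ n ih =>
    by_cases hm : γ m ∈ K
    · exact W.measure_followThenHit_le_of_mem hγ (hK _ hm) (n + 1)
    let γ' (p : Fin d × Bool) : ℕ → Zd d := Function.update γ (m + 1) (γ m + stepVec p)
    have hstart (p) : γ' p 0 = γ 0 := Function.update_of_ne (by omega) _ _
    have hend (p) : γ' p (m + 1) = γ m + stepVec p := Function.update_self _ _ _
    calc W.P (γ 0) (FollowThenHit K γ m (n + 1))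
      _ ≤ W.P (γ 0) (⋃ p, FollowThenHit K (γ' p) (m + 1) n) :=
        measure_mono_ae (W.followThenHit_succ_ae_le _ hm n)
      _ ≤ ∑ p, W.P (γ 0) (FollowThenHit K (γ' p) (m + 1) n) := measure_iUnion_fintype_le _ _
      _ ≤ ∑ p, ((2 * d : ℕ) : ℝ≥0∞)⁻¹ ^ (m + 1) * ψ (γ m + stepVec p) := by
        gcongr with p
        rw [← hstart p, ← hend p]
        exact ih (m + 1) (γ' p) (isNbr_update_succ hγ p)
      _ = ((2 * d : ℕ) : ℝ≥0∞)⁻¹ ^ m * stepAvg d ψ (γ m) := by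
        rw [stepAvg_apply, ← Finset.mul_sum, pow_succ, mul_assoc]
      _ ≤ ((2 * d : ℕ) : ℝ≥0∞)⁻¹ ^ m * ψ (γ m) := by gcongr; exact hψ _

theorem hits_eq_iUnion_hitBy (K : Set (Zd d)) : Hits K = ⋃ n, HitBy K n :=
  Set.ext fun _ => ⟨fun ⟨t, ht⟩ => Set.mem_iUnion.2 ⟨t, t, le_rfl, ht⟩,
    fun h => let ⟨_, t, _, ht⟩ := Set.mem_iUnion.1 h; ⟨t, ht⟩⟩

theorem monotone_hitBy (K : Set (Zd d)) : Monotone (HitBy K) :=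
  fun _ _ hmn _ ⟨t, ht, htK⟩ => ⟨t, ht.trans hmn, htK⟩

theorem SRW.measure_hits_le (W : SRW d) (z : Zd d) {K : Set (Zd d)} {ψ : Zd d → ℝ≥0∞}
    (hψ : stepAvg d ψ ≤ ψ) (hK : ∀ x ∈ K, 1 ≤ ψ x) : W.P z (Hits K) ≤ ψ z := by
  rw [hits_eq_iUnion_hitBy, (monotone_hitBy K).measure_iUnion]
  refine iSup_le fun n => ?_
  calc W.P z (HitBy K n)
    _ ≤ W.P z (FollowThenHit K (fun _ => z) 0 n) := measure_mono_ae <| by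
      filter_upwards [W.ae_start z] with ω hω
      rintro ⟨t, ht, htK⟩
      exact ⟨fun s hs => Nat.le_zero.1 hs ▸ hω, t, ht, by rwa [zero_add]⟩
    _ ≤ ψ z := by
      simpa using W.measure_followThenHit_le hψ hK n 0 (fun _ => z) (by simp)

end HittingProbabilities

section Potential

variable {d : ℕ}

/-- The Green potential `x ↦ E_x[∑ₜ f(Xₜ)]`; for `f` the indicator of a set it is the expected
total time spent in that set. -/
def potential (f : Zd d → ℝ≥0∞) (x : Zd d) : ℝ≥0∞ := ∑' t, (stepAvg d ^ t) f x

theorem potential_mono : Monotone (potential (d := d)) := fun _ _ h x =>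
  ENNReal.tsum_le_tsum fun t => stepAvg_pow_mono t h x

theorem potential_finsetSum {ι : Type*} (s : Finset ι) (f : ι → Zd d → ℝ≥0∞) :
    potential (∑ i ∈ s, f i) = ∑ i ∈ s, potential (f i) := by
  funext x
  simp only [potential, map_sum, Finset.sum_apply]
  exact Summable.tsum_finsetSum fun _ _ => ENNReal.summable

theorem stepAvg_potential (f : Zd d → ℝ≥0∞) (x : Zd d) :
    stepAvg d (potential f) x = ∑' t, (stepAvg d ^ (t + 1)) f x := by
  simp only [stepAvg_apply, potential, pow_succ', Module.End.mul_apply, ENNReal.tsum_mul_left]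
  rw [Summable.tsum_finsetSum fun _ _ => ENNReal.summable]

theorem stepAvg_potential_le (f : Zd d → ℝ≥0∞) : stepAvg d (potential f) ≤ potential f :=
  fun x => (stepAvg_potential f x).trans_le <|
    ENNReal.tsum_comp_le_tsum_of_injective (add_left_injective 1) fun t => (stepAvg d ^ t) f x

theorem sum_range_stepAvg_pow_add_le {f g : Zd d → ℝ≥0∞} (h : f + stepAvg d g ≤ g) (n : ℕ) :
    ∑ t ∈ Finset.range n, (stepAvg d ^ t) f + (stepAvg d ^ n) g ≤ g := by
  induction n with
  | zero => simp
  | succ n ih =>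
    calc ∑ t ∈ Finset.range (n + 1), (stepAvg d ^ t) f + (stepAvg d ^ (n + 1)) g
      _ = ∑ t ∈ Finset.range n, (stepAvg d ^ t) f + (stepAvg d ^ n) (f + stepAvg d g) := by
        rw [Finset.sum_range_succ, map_add, pow_succ, Module.End.mul_apply, add_assoc]
      _ ≤ ∑ t ∈ Finset.range n, (stepAvg d ^ t) f + (stepAvg d ^ n) g := by
        gcongr; exact stepAvg_pow_mono n h
      _ ≤ g := ih

theorem potential_le_of_add_stepAvg_le {f g : Zd d → ℝ≥0∞} (h : f + stepAvg d g ≤ g) :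
    potential f ≤ g := by
  refine fun x => ENNReal.tsum_le_of_sum_range_le fun n => ?_
  rw [← Finset.sum_apply]
  exact (le_self_add.trans (sum_range_stepAvg_pow_add_le h n)) x

theorem potential_indicator_one_le_ofReal (hd : 0 < d) {h : Zd d → ℝ} (hh : 0 ≤ h) {S : Set (Zd d)}
    (hsuper : ∀ x, nbrMean h x ≤ h x) (hdrop : ∀ x ∈ S, 1 + nbrMean h x ≤ h x) (x : Zd d) :
    potential (S.indicator 1) x ≤ ENNReal.ofReal (h x) := by
  refine potential_le_of_add_stepAvg_le (g := fun x => ENNReal.ofReal (h x)) (fun x => ?_) x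
  rw [Pi.add_apply, stepAvg_ofReal hd hh]
  by_cases hx : x ∈ S
  · rw [Set.indicator_of_mem hx, Pi.one_apply, ← ENNReal.ofReal_one,
      ← ENNReal.ofReal_add zero_le_one (nbrMean_nonneg hh x)]
    exact ENNReal.ofReal_le_ofReal (hdrop x hx)
  · rw [Set.indicator_of_notMem hx, zero_add]
    exact ENNReal.ofReal_le_ofReal (hsuper x)

theorem le_sum_range_stepAvg_pow_add {f φ : Zd d → ℝ≥0∞} (h : φ ≤ f + stepAvg d φ) (n : ℕ) :
    φ ≤ ∑ t ∈ Finset.range n, (stepAvg d ^ t) f + (stepAvg d ^ n) φ := by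
  induction n with
  | zero => simp
  | succ n ih =>
    calc φ ≤ ∑ t ∈ Finset.range n, (stepAvg d ^ t) f + (stepAvg d ^ n) φ := ih
      _ ≤ ∑ t ∈ Finset.range n, (stepAvg d ^ t) f + (stepAvg d ^ n) (f + stepAvg d φ) := by
        gcongr; exact stepAvg_pow_mono n h
      _ = ∑ t ∈ Finset.range (n + 1), (stepAvg d ^ t) f + (stepAvg d ^ (n + 1)) φ := by
        rw [Finset.sum_range_succ, map_add, pow_succ, Module.End.mul_apply, add_assoc]

/-- Where the potential of `f` is finite, `Qⁿf` tends to zero, and so does `Qⁿφ ≤ c Qⁿf`. -/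
theorem le_potential_of_le_add_stepAvg {f φ : Zd d → ℝ≥0∞} (h : φ ≤ f + stepAvg d φ)
    {c : ℝ≥0∞} (hc : c ≠ ∞) (hφ : φ ≤ c • f) : φ ≤ potential f := by
  intro x
  rcases eq_or_ne (potential f x) ∞ with htop | hfin
  · exact htop ▸ le_top
  have hbound (n : ℕ) : φ x ≤ potential f x + c * (stepAvg d ^ n) f x :=
    calc φ x ≤ (∑ t ∈ Finset.range n, (stepAvg d ^ t) f + (stepAvg d ^ n) φ) x :=
        le_sum_range_stepAvg_pow_add h n x
      _ = ∑ t ∈ Finset.range n, (stepAvg d ^ t) f x + (stepAvg d ^ n) φ x := by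
        rw [Pi.add_apply, Finset.sum_apply]
      _ ≤ potential f x + (stepAvg d ^ n) (c • f) x :=
        add_le_add (ENNReal.sum_le_tsum _) (stepAvg_pow_mono n hφ x)
      _ = potential f x + c * (stepAvg d ^ n) f x := by
        rw [map_smul, Pi.smul_apply, smul_eq_mul]
  have hlim : Tendsto (fun n => potential f x + c * (stepAvg d ^ n) f x) atTop
      (nhds (potential f x + c * 0)) :=
    (ENNReal.Tendsto.const_mul
      (ENNReal.tendsto_atTop_zero_of_tsum_ne_top hfin) (.inr hc)).const_add _
  rw [mul_zero, add_zero] at hlim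
  exact ge_of_tendsto' hlim hbound

theorem SRW.measure_hits_le_potential (W : SRW d) (z : Zd d) {K : Set (Zd d)}
    {f : Zd d → ℝ≥0∞} {c : ℝ≥0∞} (hc₀ : c ≠ 0) (hc : c ≠ ∞) (hK : ∀ x ∈ K, c ≤ potential f x) :
    W.P z (Hits K) ≤ c⁻¹ * potential f z := by
  refine W.measure_hits_le z (ψ := c⁻¹ • potential f) ?_ fun x hx => ?_
  · rw [map_smul]
    exact fun x => mul_le_mul_right (stepAvg_potential_le f x) _
  · calc 1 = c⁻¹ * c := (ENNReal.inv_mul_cancel hc₀ hc).symm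
      _ ≤ c⁻¹ * potential f x := by gcongr; exact hK x hx

end Potential

section Occupation

variable {d : ℕ}

theorem ofReal_sq_le_potential_closedBall_self (hd : 0 < d) {r : ℝ} (hr : 0 ≤ r) (w : Zd d) :
    ENNReal.ofReal (r ^ 2) ≤ potential ((Metric.closedBall w r).indicator 1) w := by
  let φ (x : Zd d) : ℝ≥0∞ := ENNReal.ofReal (r ^ 2 - sqNorm (x - w))
  have hφ_off {x : Zd d} (hx : x ∉ Metric.closedBall w r) : φ x = 0 :=
    ENNReal.ofReal_of_nonpos <| sub_nonpos.2 <| le_of_not_ge fun h =>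
      hx (mem_closedBall_iff_norm.2 (norm_le_of_sqNorm_le_sq hr h))
  have hφ_sub : φ ≤ (Metric.closedBall w r).indicator 1 + stepAvg d φ := fun x => by
    by_cases hx : x ∈ Metric.closedBall w r
    · calc φ x = ENNReal.ofReal (1 + nbrMean (fun y => r ^ 2 - sqNorm (y - w)) x) := by
            rw [nbrMean_const_sub_sqNorm hd, add_sub_cancel]
        _ ≤ 1 + ENNReal.ofReal (nbrMean (fun y => r ^ 2 - sqNorm (y - w)) x) := by
            simpa using ENNReal.ofReal_add_le (p := 1)
        _ ≤ ((Metric.closedBall w r).indicator 1 + stepAvg d φ : Zd d → ℝ≥0∞) x := by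
            rw [Pi.add_apply, Set.indicator_of_mem hx, Pi.one_apply]
            gcongr
            exact ofReal_nbrMean_le hd _ x
    · rw [hφ_off hx]
      exact zero_le
  have hφ_le : φ ≤ ENNReal.ofReal (r ^ 2) • (Metric.closedBall w r).indicator 1 := fun x => by
    by_cases hx : x ∈ Metric.closedBall w r
    · simpa [hx] using ENNReal.ofReal_le_ofReal (sub_le_self _ (sqNorm_nonneg (x - w)))
    · rw [hφ_off hx]
      exact zero_le
  calc ENNReal.ofReal (r ^ 2) = φ w := by simp [φ, sqNorm]
    _ ≤ potential ((Metric.closedBall w r).indicator 1) w :=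
      le_potential_of_le_add_stepAvg hφ_sub ENNReal.ofReal_ne_top hφ_le w

theorem ofReal_sq_le_potential_closedBall (hd : 0 < d) {r : ℝ} {w y : Zd d}
    (hw : w ∈ Metric.closedBall y r) :
    ENNReal.ofReal (r ^ 2) ≤ potential ((Metric.closedBall y (2 * r)).indicator 1) w := by
  have hsub : Metric.closedBall w r ⊆ Metric.closedBall y (2 * r) :=
    Metric.closedBall_subset_closedBall' (by linarith [Metric.mem_closedBall.1 hw])
  exact (ofReal_sq_le_potential_closedBall_self hd (dist_nonneg.trans hw) w).trans
    (potential_mono (Set.indicator_le_indicator_of_subset hsub fun _ => zero_le) w)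

end Occupation

section InvSqrt

/-- This is the quartic Taylor polynomial of `(1 + s)^(-1/2)` with its last coefficient raised from
`35/128` to `1`. -/
theorem inv_sqrt_one_add_le {s : ℝ} (hs : |s| ≤ 1 / 2) :
    (√(1 + s))⁻¹ ≤ 1 - s / 2 + 3 / 8 * s ^ 2 - 5 / 16 * s ^ 3 + s ^ 4 := by
  obtain ⟨hlo, hhi⟩ := abs_le.1 hs
  set T : ℝ := 1 - s / 2 + 3 / 8 * s ^ 2 - 5 / 16 * s ^ 3 with hT
  have hsq : s ^ 2 ≤ 1 / 4 := by nlinarith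
  have hT_ge : 7 / 10 ≤ T := by nlinarith [sq_nonneg s]
  have hrem : 0 ≤ -35 / 64 + 14 / 64 * s - 35 / 256 * s ^ 2 + 25 / 256 * s ^ 3
      + 2 * (T * (1 + s)) := by
    have : T * (1 + s) = 1 + s / 2 - s ^ 2 / 8 + s ^ 3 / 16 - 5 / 16 * s ^ 4 := by rw [hT]; ring
    rw [this]
    nlinarith [sq_nonneg s]
  have hexpand : (T + s ^ 4) ^ 2 * (1 + s) = 1 + s ^ 4 * (-35 / 64 + 14 / 64 * s
      - 35 / 256 * s ^ 2 + 25 / 256 * s ^ 3 + 2 * (T * (1 + s)) + s ^ 4 * (1 + s)) := by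
    rw [hT]; ring
  have hpos : 0 < 1 + s := by linarith
  rw [← Real.sqrt_inv, Real.sqrt_le_iff, inv_le_iff_one_le_mul₀ hpos, hexpand]
  exact ⟨by positivity, le_add_of_nonneg_right (by positivity)⟩

theorem inv_sqrt_add_add_inv_sqrt_sub_le {u τ : ℝ} (hu : 0 < u) (hτ : |τ| ≤ u / 2) :
    (√(u + τ))⁻¹ + (√(u - τ))⁻¹ ≤ (√u)⁻¹ * (2 + 3 / 4 * (τ / u) ^ 2 + 2 * (τ / u) ^ 4) := by
  have hscale (σ : ℝ) (hσ : |σ| ≤ u / 2) : (√(u + σ))⁻¹ ≤ (√u)⁻¹ *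
      (1 - σ / u / 2 + 3 / 8 * (σ / u) ^ 2 - 5 / 16 * (σ / u) ^ 3 + (σ / u) ^ 4) := by
    have hfactor : u + σ = u * (1 + σ / u) := by field_simp
    rw [hfactor, Real.sqrt_mul hu.le, mul_inv]
    gcongr
    refine inv_sqrt_one_add_le ?_
    rw [abs_div, abs_of_pos hu, div_le_iff₀ hu]
    linarith
  have hneg := hscale (-τ) (by rwa [abs_neg])
  rw [← sub_eq_add_neg] at hneg
  refine (add_le_add (hscale τ hτ) hneg).trans_eq ?_
  ring

theorem le_inv_sqrt_sub_one {u : ℝ} (hu : 1 < u) :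
    (√u)⁻¹ * (1 + 1 / (2 * u)) ≤ (√(u - 1))⁻¹ := by
  have : 0 < u := by linarith
  have hu₁ : 0 < u - 1 := by linarith
  rw [← Real.sqrt_inv, ← Real.sqrt_inv]
  refine Real.le_sqrt_of_sq_le ?_
  rw [mul_pow, Real.sq_sqrt (by positivity), ← sub_nonneg]
  have : (u - 1)⁻¹ - u⁻¹ * (1 + 1 / (2 * u)) ^ 2 = (3 * u + 1) / (4 * u ^ 3 * (u - 1)) := by
    field_simp
    ring
  rw [this]
  positivity

end InvSqrt

section SmoothedInvNorm

variable {d : ℕ}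

/-- The function `x ↦ (c + |x|²)^(-1/2)`, with `|x|` the Euclidean norm. It is a bounded version of
`|x|⁻¹`, which is superharmonic away from the origin in every dimension at least three. -/
def smoothedInvNorm (c : ℝ) (x : Zd d) : ℝ := (√(c + sqNorm x))⁻¹

theorem smoothedInvNorm_nonneg (c : ℝ) : (0 : Zd d → ℝ) ≤ smoothedInvNorm c :=
  fun _ => inv_nonneg.2 (Real.sqrt_nonneg _)

theorem smoothedInvNorm_add_stepVec_le {c u : ℝ} (hc : 20 ≤ c) {x : Zd d}
    (hu : u = c + sqNorm x + 1) (i : Fin d) :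
    smoothedInvNorm c (x + stepVec (i, true)) + smoothedInvNorm c (x + stepVec (i, false)) ≤
      (√u)⁻¹ * (2 + (3 + 32 / u) / u ^ 2 * (x i : ℝ) ^ 2) := by
  have hxu : (x i : ℝ) ^ 2 + 21 ≤ u := by linarith [sq_apply_le_sqNorm x i]
  have hu₀ : 0 < u := by linarith [sq_nonneg (x i : ℝ)]
  have hstep : |2 * (x i : ℝ)| ≤ u / 2 :=
    abs_le.2 ⟨by nlinarith [sq_nonneg ((x i : ℝ) + 2)], by nlinarith [sq_nonneg ((x i : ℝ) - 2)]⟩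
  have hplus : c + sqNorm (x + stepVec (i, true)) = u + 2 * x i := by
    rw [sqNorm_add_stepVec, if_pos rfl, hu]; ring
  have hminus : c + sqNorm (x + stepVec (i, false)) = u - 2 * x i := by
    rw [sqNorm_add_stepVec, if_neg Bool.false_ne_true, hu]; ring
  rw [smoothedInvNorm, smoothedInvNorm, hplus, hminus]
  refine (inv_sqrt_add_add_inv_sqrt_sub_le hu₀ hstep).trans ?_
  gcongr (√u)⁻¹ * ?_
  calc 2 + 3 / 4 * (2 * (x i : ℝ) / u) ^ 2 + 2 * (2 * (x i : ℝ) / u) ^ 4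
    _ = 2 + 3 / u ^ 2 * (x i : ℝ) ^ 2 + 32 / u ^ 4 * (x i : ℝ) ^ 2 * (x i : ℝ) ^ 2 := by ring
    _ ≤ 2 + 3 / u ^ 2 * (x i : ℝ) ^ 2 + 32 / u ^ 4 * (x i : ℝ) ^ 2 * u := by
      gcongr; linarith
    _ = 2 + (3 + 32 / u) / u ^ 2 * (x i : ℝ) ^ 2 := by field_simp; ring

/-- The leading terms `3 xᵢ² / u²` contribute `3 |x|² / (2d u²)` to the mean, which `d ≥ 3` keeps
below the gain `1 / (2u)` of `le_inv_sqrt_sub_one`. -/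
theorem nbrMean_smoothedInvNorm_le (hd : 3 ≤ d) {c u : ℝ} (hc : 20 ≤ c) {x : Zd d}
    (hu : u = c + sqNorm x + 1) :
    nbrMean (smoothedInvNorm c) x ≤ (√u)⁻¹ * (1 + (3 + 32 / u) / u ^ 2 * sqNorm x / 6) := by
  have hu₀ : 0 < u := by linarith [sqNorm_nonneg x]
  have hd' : (3 : ℝ) ≤ d := by exact_mod_cast hd
  calc nbrMean (smoothedInvNorm c) x
    _ ≤ (2 * d : ℝ)⁻¹ * ∑ i, (√u)⁻¹ * (2 + (3 + 32 / u) / u ^ 2 * (x i : ℝ) ^ 2) := by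
      rw [nbrMean_eq_sum_coord]
      gcongr with i
      exact smoothedInvNorm_add_stepVec_le hc hu i
    _ = (√u)⁻¹ * (1 + (3 + 32 / u) / u ^ 2 * sqNorm x / (2 * d)) := by
      rw [← Finset.mul_sum, Finset.sum_add_distrib, ← Finset.mul_sum, ← sqNorm, Finset.sum_const,
        Finset.card_univ, Fintype.card_fin, nsmul_eq_mul]
      field_simp
    _ ≤ (√u)⁻¹ * (1 + (3 + 32 / u) / u ^ 2 * sqNorm x / 6) := by
      have := sqNorm_nonneg x
      gcongr
      linarith

theorem nbrMean_smoothedInvNorm_add_le (hd : 3 ≤ d) {c u : ℝ} (hc : 20 ≤ c) {x : Zd d}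
    (hu : u = c + sqNorm x + 1) :
    nbrMean (smoothedInvNorm c) x + c / (4 * u ^ 2 * √u) ≤ smoothedInvNorm c x := by
  have hN := sqNorm_nonneg x
  have hu₀ : 0 < u := by linarith
  have hgap : (3 + 32 / u) / u ^ 2 * sqNorm x / 6 + c / (4 * u ^ 2) ≤ 1 / (2 * u) := by
    have hNu : sqNorm x / u ≤ 1 := (div_le_one hu₀).2 (by linarith)
    calc (3 + 32 / u) / u ^ 2 * sqNorm x / 6 + c / (4 * u ^ 2)
      _ = (6 * sqNorm x + 64 * (sqNorm x / u) + 3 * c) / (12 * u ^ 2) := by field_simp; ring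
      _ ≤ 6 * u / (12 * u ^ 2) := by gcongr; linarith
      _ = 1 / (2 * u) := by field_simp; norm_num
  calc nbrMean (smoothedInvNorm c) x + c / (4 * u ^ 2 * √u)
    _ ≤ (√u)⁻¹ * (1 + (3 + 32 / u) / u ^ 2 * sqNorm x / 6) + c / (4 * u ^ 2 * √u) := by
      gcongr; exact nbrMean_smoothedInvNorm_le hd hc hu
    _ = (√u)⁻¹ * (1 + ((3 + 32 / u) / u ^ 2 * sqNorm x / 6 + c / (4 * u ^ 2))) := by
      rw [← div_div]; ring
    _ ≤ (√u)⁻¹ * (1 + 1 / (2 * u)) := by gcongr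
    _ ≤ (√(u - 1))⁻¹ := le_inv_sqrt_sub_one (by linarith)
    _ = smoothedInvNorm c x := by rw [smoothedInvNorm, hu, add_sub_cancel_right]

theorem nbrMean_smoothedInvNorm_le_self (hd : 3 ≤ d) {c : ℝ} (hc : 20 ≤ c) (x : Zd d) :
    nbrMean (smoothedInvNorm c) x ≤ smoothedInvNorm c x :=
  le_of_add_le_of_nonneg_left (nbrMean_smoothedInvNorm_add_le hd hc rfl) <| by
    have := sqNorm_nonneg x
    positivity

theorem smoothedInvNorm_le_inv {c ρ : ℝ} (hρ : 0 < ρ) (hc : ρ ^ 2 ≤ c) (x : Zd d) :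
    smoothedInvNorm c x ≤ ρ⁻¹ :=
  inv_anti₀ hρ (Real.le_sqrt_of_sq_le (hc.trans (le_add_of_nonneg_right (sqNorm_nonneg x))))

theorem nbrMean_smoothedInvNorm_add_le_of_norm_le (hd : 3 ≤ d) {ρ : ℝ} (hρ : 1 ≤ ρ) {x : Zd d}
    (hx : ‖x‖ ≤ ρ) :
    nbrMean (smoothedInvNorm (20 * ρ ^ 2)) x + 5 / ((d + 21) ^ 2 * √(d + 21) * ρ ^ 3) ≤
      smoothedInvNorm (20 * ρ ^ 2) x := by
  have hρ₂ : 1 ≤ ρ ^ 2 := one_le_pow₀ hρ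
  have hN := sqNorm_nonneg x
  have hu_le : 20 * ρ ^ 2 + sqNorm x + 1 ≤ (d + 21) * ρ ^ 2 := by
    have : sqNorm x ≤ d * ρ ^ 2 := (sqNorm_le_card_mul_norm_sq x).trans (by gcongr)
    linarith
  refine le_trans ?_ (nbrMean_smoothedInvNorm_add_le hd (by linarith) rfl)
  gcongr nbrMean (smoothedInvNorm (20 * ρ ^ 2)) x + ?_
  set u := 20 * ρ ^ 2 + sqNorm x + 1
  have : 0 < u := by positivity
  calc 5 / ((d + 21) ^ 2 * √(d + 21) * ρ ^ 3)
    _ = 20 * ρ ^ 2 / (4 * ((d + 21) * ρ ^ 2) ^ 2 * √((d + 21) * ρ ^ 2)) := by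
      rw [Real.sqrt_mul (by positivity), Real.sqrt_sq (by positivity)]
      field_simp
      norm_num
    _ ≤ 20 * ρ ^ 2 / (4 * u ^ 2 * √u) := by gcongr

theorem exists_potential_closedBall_le (hd : 3 ≤ d) :
    ∃ A : ℝ, 0 ≤ A ∧ ∀ ρ : ℝ, 1 ≤ ρ → ∀ a z : Zd d,
      potential ((Metric.closedBall a ρ).indicator 1) z ≤ ENNReal.ofReal (A * ρ ^ 2) := by
  let A : ℝ := (d + 21) ^ 2 * √(d + 21) / 5
  refine ⟨A, by positivity, fun ρ hρ a z => ?_⟩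
  have hρ₀ : 0 < ρ := by linarith
  have hc : 20 ≤ 20 * ρ ^ 2 := by nlinarith
  have hdrop : ∀ x ∈ Metric.closedBall a ρ,
      1 + A * ρ ^ 3 * nbrMean (smoothedInvNorm (20 * ρ ^ 2)) (x - a) ≤
        A * ρ ^ 3 * smoothedInvNorm (20 * ρ ^ 2) (x - a) := fun x hx => by
    have hunit : A * ρ ^ 3 * (5 / ((d + 21) ^ 2 * √(d + 21) * ρ ^ 3)) = 1 := by
      simp only [A]; field_simp
    rw [← hunit, ← mul_add, add_comm]
    gcongr A * ρ ^ 3 * ?_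
    exact nbrMean_smoothedInvNorm_add_le_of_norm_le hd hρ (mem_closedBall_iff_norm.1 hx)
  calc potential ((Metric.closedBall a ρ).indicator 1) z
    _ ≤ ENNReal.ofReal (A * ρ ^ 3 * smoothedInvNorm (20 * ρ ^ 2) (z - a)) := by
      refine potential_indicator_one_le_ofReal (by omega)
        (h := fun x => A * ρ ^ 3 * smoothedInvNorm (20 * ρ ^ 2) (x - a)) (fun x => ?_)
        (fun x => ?_) (fun x hx => ?_) z
      · exact mul_nonneg (by positivity) (smoothedInvNorm_nonneg _ _)
      · rw [nbrMean_const_mul_comp_sub]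
        gcongr A * ρ ^ 3 * ?_
        exact nbrMean_smoothedInvNorm_le_self hd hc _
      · rw [nbrMean_const_mul_comp_sub]
        exact hdrop x hx
    _ ≤ ENNReal.ofReal (A * ρ ^ 3 * ρ⁻¹) := by
      gcongr
      exact smoothedInvNorm_le_inv hρ₀ (by nlinarith) _
    _ = ENNReal.ofReal (A * ρ ^ 2) := by field_simp

end SmoothedInvNorm

section VisitedBalls

variable {d : ℕ} {ι : Type*} {r ρ : ℝ} {a : Zd d} {y : ι → Zd d}

theorem sum_indicator_closedBall_le (hsep : Pairwise fun i j => 4 * r < dist (y i) (y j))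
    (hrρ : r ≤ ρ) (hy : ∀ i, y i ∈ Metric.closedBall a ρ) (s : Finset ι) :
    ∑ i ∈ s, (Metric.closedBall (y i) (2 * r)).indicator 1 ≤
      (Metric.closedBall a (3 * ρ)).indicator (1 : Zd d → ℝ≥0∞) := by
  have hdisj : (s : Set ι).PairwiseDisjoint fun i => Metric.closedBall (y i) (2 * r) :=
    fun i _ j _ hij => Metric.closedBall_disjoint_closedBall (by linarith [hsep hij])
  have hsub : ⋃ i ∈ s, Metric.closedBall (y i) (2 * r) ⊆ Metric.closedBall a (3 * ρ) :=
    Set.iUnion₂_subset fun i _ => Metric.closedBall_subset_closedBall'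
      (by linarith [Metric.mem_closedBall.1 (hy i)])
  intro x
  rw [Finset.sum_apply, ← Finset.indicator_biUnion_apply s _ hdisj]
  exact Set.indicator_le_indicator_of_subset hsub (fun _ => zero_le) x

theorem SRW.tsum_measure_hits_closedBall_le (W : SRW d) (hd : 0 < d) (hr : 0 < r)
    (hsep : Pairwise fun i j => 4 * r < dist (y i) (y j)) (hrρ : r ≤ ρ)
    (hy : ∀ i, y i ∈ Metric.closedBall a ρ) (z : Zd d) :
    ∑' i, W.P z (Hits (Metric.closedBall (y i) r)) ≤
      (ENNReal.ofReal (r ^ 2))⁻¹ * potential ((Metric.closedBall a (3 * ρ)).indicator 1) z := by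
  rw [ENNReal.tsum_eq_iSup_sum]
  refine iSup_le fun s => ?_
  calc ∑ i ∈ s, W.P z (Hits (Metric.closedBall (y i) r))
    _ ≤ ∑ i ∈ s, (ENNReal.ofReal (r ^ 2))⁻¹ *
          potential ((Metric.closedBall (y i) (2 * r)).indicator 1) z := by
      gcongr with i
      exact W.measure_hits_le_potential z (ENNReal.ofReal_pos.2 (pow_pos hr 2)).ne'
        ENNReal.ofReal_ne_top fun _ => ofReal_sq_le_potential_closedBall hd
    _ = (ENNReal.ofReal (r ^ 2))⁻¹ *
          potential (∑ i ∈ s, (Metric.closedBall (y i) (2 * r)).indicator 1) z := by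
      rw [potential_finsetSum, Finset.sum_apply, Finset.mul_sum]
    _ ≤ (ENNReal.ofReal (r ^ 2))⁻¹ * potential ((Metric.closedBall a (3 * ρ)).indicator 1) z := by
      gcongr
      exact potential_mono (sum_indicator_closedBall_le hsep hrρ hy s) z

end VisitedBalls

theorem expected_number_of_visited_boxes_bound_general {d : ℕ} (hd : 3 ≤ d) :
    ∃ C : ℝ≥0∞, C ≠ ⊤ ∧ ∀ (W : SRW d) (r R : ℕ) (z : Zd d),
      1 ≤ r → r ≤ R →
      ∑' y : {y : Zd d // (∀ i, (10 * r : ℤ) ∣ y i) ∧ supNorm y ≤ 2 * R + r},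
          W.P z (Hits {w : Zd d | supNorm (w - y.1) ≤ r})
        ≤ C * ((R : ℝ≥0∞) / r) ^ 2 := by
  obtain ⟨A, hA, hpot⟩ := exists_potential_closedBall_le hd
  refine ⟨ENNReal.ofReal (81 * A), ENNReal.ofReal_ne_top, fun W r R z hr hrR => ?_⟩
  have hr' : (1 : ℝ) ≤ r := by exact_mod_cast hr
  have hrR' : (r : ℝ) ≤ R := by exact_mod_cast hrR
  simp only [setOf_supNorm_sub_le]
  calc ∑' y : {y : Zd d // (∀ i, (10 * r : ℤ) ∣ y i) ∧ supNorm y ≤ 2 * R + r},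
        W.P z (Hits (Metric.closedBall y.1 r))
    _ ≤ (ENNReal.ofReal ((r : ℝ) ^ 2))⁻¹ *
          potential ((Metric.closedBall 0 (3 * (3 * R : ℝ))).indicator 1) z := by
      refine W.tsum_measure_hits_closedBall_le (by omega) (by linarith) (fun x y hxy => ?_)
        (by linarith) (fun y => ?_) z
      · have hdist := le_dist_of_dvd_coord x.2.1 y.2.1 (Subtype.coe_ne_coe.2 hxy)
        push_cast at hdist
        linarith
      · rw [mem_closedBall_zero_iff, ← natCast_supNorm]
        exact_mod_cast y.2.2.trans (by omega)
    _ ≤ (ENNReal.ofReal ((r : ℝ) ^ 2))⁻¹ * ENNReal.ofReal (A * (3 * (3 * R)) ^ 2) := by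
      gcongr
      exact hpot _ (by linarith) 0 z
    _ = ENNReal.ofReal (81 * A * ((R : ℝ) / r) ^ 2) := by
      rw [← ENNReal.ofReal_inv_of_pos (by positivity), ← ENNReal.ofReal_mul (by positivity)]
      ring_nf
    _ = ENNReal.ofReal (81 * A) * ((R : ℝ≥0∞) / r) ^ 2 := by
      rw [ENNReal.ofReal_mul (by positivity), ENNReal.ofReal_pow (by positivity),
        ENNReal.ofReal_div_of_pos (by linarith), ENNReal.ofReal_natCast, ENNReal.ofReal_natCast]

theorem expected_number_of_visited_boxes_bound {d : ℕ} (hd : 3 ≤ d) :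
    ∃ C : ℝ≥0∞, C ≠ ⊤ ∧ ∀ (W : SRW d) (r R : ℕ) (z : Zd d),
      1 ≤ r → r ≤ R → supNorm z ≤ R →
      ∑' y : {y : Zd d // (∀ i, (10 * r : ℤ) ∣ y i) ∧ supNorm y ≤ 2 * R + r},
          W.P z (Hits {w : Zd d | supNorm (w - y.1) ≤ r})
        ≤ C * ((R : ℝ≥0∞) / r) ^ 2 := by
  obtain ⟨C, hC, hbound⟩ := expected_number_of_visited_boxes_bound_general hd
  exact ⟨C, hC, fun W r R z hr hrR _ => hbound W r R z hr hrR⟩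

end
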